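/- Let n ≥ 3 be odd and let D be a generalized twisted drawing of K_n with vertices labeled v_1,…,v_n so that the rays from O through v_1,…,v_n appear in counterclockwise order around O and the ray r lies counterclockwise between the ray through v_n and the ray through v_1. Then the Hamiltonian cycle v_1, v_{⌈n/2⌉+1}, v_2, v_{⌈n/2⌉+2}, …, v_{⌈n/2⌉−1}, v_n, v_{⌈n/2⌉}, v_1 is plane; in particular, D contains a plane Hamiltonian cycle. -/

import Mathlib

/-! In polar coordinates around `O`, an edge `ij` with `i < j` of a generalized twisted drawing is
the graph of a positive radius function over the angular interval `[θ j, θ i + 2π]`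
(`SimpleDrawing.edge_polarGraph`): lift the edge through the exponential map; c-monotonicity makes
the angle injective modulo `2π`, and since the edge meets `r` it must go the long way round.

The heart is the case of four vertices `1 < 2 < 3 < 4`: the edges `13` and `24` are disjoint
(`SimpleDrawing.interleaved_disjoint`, via `k4_core`). The angles they share are `[θ 4, θ 1 + 2π]`.
Up to negating the radii, vertex `4` lies outside `13`. If vertex `1` lies inside `24`, then the
edge `14` runs strictly between `13` and `24`, so these do not even touch. If vertex `1` lies
outside `24`, then following the edges adjacent to them shows that `12` and `34` exchange their
radial order over `[θ 4, θ 1 + 2π]` and once more over `[θ 2, θ 3]` (modulo `2π`); so they meet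
twice, which is impossible.

For `n = 2m - 1`, each edge of the cycle joins labels `p ≤ m - 1 ≤ q` (counted from `0`) with
`q - p ∈ {m - 1, m}`, so two edges of the cycle without a common vertex have interleaving
endpoints, and the four-vertex case applies. -/

open Set

/-- Points of the plane. -/
abbrev Pt : Type := ℝ × ℝ

/-- `A` is a simple (continuous, injective) arc from `p` to `q`. -/
def IsSimpleArc (A : Set Pt) (p q : Pt) : Prop :=
  ∃ f : ℝ → Pt, ContinuousOn f (Set.Icc 0 1) ∧ Set.InjOn f (Set.Icc 0 1) ∧
    f 0 = p ∧ f 1 = q ∧ A = f '' Set.Icc 0 1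

/-- A simple drawing of the complete graph `K n` in the plane:  vertices are distinct
points, edges are simple arcs connecting their endpoints, no edge passes through a
vertex other than its endpoints, two edges sharing an endpoint meet exactly in that
endpoint, and two independent edges meet in at most one point. -/
structure SimpleDrawing (n : ℕ) where
  vtx : Fin n → Pt
  vtx_inj : Function.Injective vtx
  arc : Fin n → Fin n → Set Pt
  arc_symm : ∀ i j, arc i j = arc j i
  arc_simple : ∀ i j, i ≠ j → IsSimpleArc (arc i j) (vtx i) (vtx j)
  vtx_not_mem : ∀ i j k, i ≠ j → k ≠ i → k ≠ j → vtx k ∉ arc i j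
  adj_inter : ∀ i j k, i ≠ j → i ≠ k → j ≠ k → arc i j ∩ arc i k = {vtx i}
  indep_inter : ∀ i j k l, i ≠ j → k ≠ l → i ≠ k → i ≠ l → j ≠ k → j ≠ l →
    (arc i j ∩ arc k l).Subsingleton

namespace SimpleDrawing

variable {n : ℕ}

/-- The union of all edges of the drawing. -/
def drawingSet (D : SimpleDrawing n) : Set Pt :=
  ⋃ (i : Fin n) (j : Fin n) (_ : i ≠ j), D.arc i j

/-- The edges `v_i v_j` and `v_k v_l` cross: they meet in a point that is not a common
endpoint of the two edges. -/
def Crosses (D : SimpleDrawing n) (i j k l : Fin n) : Prop :=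
  ∃ x : Pt, x ∈ D.arc i j ∧ x ∈ D.arc k l ∧
    ¬ ((x = D.vtx i ∨ x = D.vtx j) ∧ (x = D.vtx k ∨ x = D.vtx l))

end SimpleDrawing

/-- The ray emanating from `O` in direction `d`. -/
def rayFrom (O d : Pt) : Set Pt := {x : Pt | ∃ t : ℝ, 0 ≤ t ∧ x = O + t • d}

namespace SimpleDrawing

/-- `D` is c-monotone with respect to the point `O`: `O` does not lie on the drawing and
every ray emanating from `O` meets every edge of `D` in at most one point. -/
def CMonotoneAt (D : SimpleDrawing n) (O : Pt) : Prop :=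
  O ∉ D.drawingSet ∧
    ∀ d : Pt, d ≠ 0 → ∀ i j : Fin n, i ≠ j → (rayFrom O d ∩ D.arc i j).Subsingleton

/-- `D` is c-monotone. -/
def CMonotone (D : SimpleDrawing n) : Prop := ∃ O : Pt, D.CMonotoneAt O

/-- `D` is generalized twisted with respect to `O` and the ray from `O` with direction `d`:
`D` is c-monotone with respect to `O` and the ray meets every edge of `D`. -/
def GenTwistedAt (D : SimpleDrawing n) (O d : Pt) : Prop :=
  D.CMonotoneAt O ∧ d ≠ 0 ∧ ∀ i j : Fin n, i ≠ j → (rayFrom O d ∩ D.arc i j).Nonempty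

/-- `D` is generalized twisted. -/
def GenTwisted (D : SimpleDrawing n) : Prop := ∃ O d : Pt, D.GenTwistedAt O d

/-- The vertices `v_1, …, v_n` of `D` appear counterclockwise around `O`, at angles
`θ 0 < θ 1 < … < θ (n-1)`, all lying strictly (counterclockwise) between the angle `φ`
of the ray `r` with direction `d` and `φ + 2π`;  i.e. the vertices are labeled
counterclockwise around `O` and the ray `r` lies counterclockwise between the ray through
`v_n` and the ray through `v_1`. -/
def IsCCWLabeling (D : SimpleDrawing n) (O d : Pt) (φ : ℝ) (θ : Fin n → ℝ) : Prop :=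
  (∃ s : ℝ, 0 < s ∧ d = s • ((Real.cos φ, Real.sin φ) : Pt)) ∧
  StrictMono θ ∧
  (∀ i : Fin n, θ i ∈ Set.Ioo φ (φ + 2 * Real.pi)) ∧
  (∀ i : Fin n, ∃ s : ℝ, 0 < s ∧
    D.vtx i = O + s • ((Real.cos (θ i), Real.sin (θ i)) : Pt))

/-- `C` is a cell of `D`: a connected component of the complement of the drawing. -/
def IsCell (D : SimpleDrawing n) (C : Set Pt) : Prop :=
  ∃ x : Pt, x ∉ D.drawingSet ∧ C = connectedComponentIn D.drawingSetᶜ x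

/-- `C` is a vi-cell of `D`: a cell whose closure contains a vertex. -/
def IsViCell (D : SimpleDrawing n) (C : Set Pt) : Prop :=
  D.IsCell C ∧ ∃ i : Fin n, D.vtx i ∈ closure C

/-- The triangle of `D` on the three vertices `i`, `j`, `k` (as a subset of the plane). -/
def triangleSet (D : SimpleDrawing n) (i j k : Fin n) : Set Pt :=
  D.arc i j ∪ D.arc j k ∪ D.arc i k

/-- Two cells are antipodal if for every triangle of `D` they lie in different sides
(connected components of the complement) of that triangle. -/
def Antipodal (D : SimpleDrawing n) (C₁ C₂ : Set Pt) : Prop :=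
  ∀ i j k : Fin n, i ≠ j → j ≠ k → i ≠ k →
    ∀ x ∈ C₁, ∀ y ∈ C₂,
      connectedComponentIn (D.triangleSet i j k)ᶜ x ≠
        connectedComponentIn (D.triangleSet i j k)ᶜ y

/-- `D` and `E` are weakly isomorphic: some bijection of the vertices preserves
crossing pairs of edges. -/
def WeaklyIso (D E : SimpleDrawing n) : Prop :=
  ∃ σ : Fin n ≃ Fin n, ∀ i j k l : Fin n, i ≠ j → k ≠ l →
    (D.Crosses i j k l ↔ E.Crosses (σ i) (σ j) (σ k) (σ l))

end SimpleDrawing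

/-- The vertex (0-indexed) at position `t` of the Hamiltonian cycle
`v_1, v_{⌈n/2⌉+1}, v_2, v_{⌈n/2⌉+2}, …, v_{⌈n/2⌉-1}, v_n, v_{⌈n/2⌉}, v_1`. -/
def hamCycIdx (n t : ℕ) : ℕ := if t % 2 = 0 then t / 2 else (n + 1) / 2 + t / 2

/-- The position-to-vertex map of the above Hamiltonian cycle, positions taken mod `n`. -/
def cycPos (n : ℕ) (hn : 0 < n) (t : ℕ) : Fin n :=
  ⟨hamCycIdx n (t % n) % n, Nat.mod_lt _ hn⟩

/-! ### Four vertices: radial orders -/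

/-- Two continuous functions that agree nowhere on an interval keep their order. -/
theorem lt_of_ne_on {f g : ℝ → ℝ} {S : Set ℝ} (hS : S.OrdConnected)
    (hf : ContinuousOn f S) (hg : ContinuousOn g S) (hne : ∀ a ∈ S, f a ≠ g a)
    {x y : ℝ} (hx : x ∈ S) (hy : y ∈ S) (h : f x < g x) : f y < g y := by
  by_contra hlt
  obtain ⟨z, hz, hz'⟩ := hS.isPreconnected.intermediate_value₂ hx hy hf hg h.le (not_lt.1 hlt)
  exact hne z hz hz'

/-- Two continuous functions that change order along an interval agree somewhere. -/
theorem exists_eq_of_lt_of_lt {f g : ℝ → ℝ} {a b : ℝ} (hab : a ≤ b)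
    (hf : ContinuousOn f (Icc a b)) (hg : ContinuousOn g (Icc a b))
    (ha : f a < g a) (hb : g b < f b) : ∃ c ∈ Icc a b, f c = g c :=
  isPreconnected_Icc.intermediate_value₂ (left_mem_Icc.2 hab) (right_mem_Icc.2 hab)
    hf hg ha.le hb.le

/-- The case of `k4_core` in which the edge `13` passes below vertex `4`. -/
theorem k4_core_pos {t1 t2 t3 t4 T : ℝ} {f12 f13 f14 f24 f34 : ℝ → ℝ}
    (h12 : t1 < t2) (h23 : t2 < t3) (h34 : t3 < t4) (h41 : t4 < t1 + T)
    (c12 : ContinuousOn f12 (Icc t2 (t1 + T))) (c13 : ContinuousOn f13 (Icc t3 (t1 + T)))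
    (c14 : ContinuousOn f14 (Icc t4 (t1 + T))) (c24 : ContinuousOn f24 (Icc t4 (t2 + T)))
    (c34 : ContinuousOn f34 (Icc t4 (t3 + T)))
    (n1 : ∀ a ∈ Icc t4 (t1 + T), f12 a ≠ f24 a)
    (n2 : ∀ a ∈ Ico t3 (t1 + T), f12 a ≠ f13 a)
    (n3 : ∀ a ∈ Icc t4 (t1 + T), f34 a ≠ f13 a)
    (n4 : ∀ a ∈ Ioc t4 (t2 + T), f34 a ≠ f24 a)
    (n5 : ∀ a ∈ Ico t4 (t1 + T), f14 a ≠ f13 a)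
    (n6 : ∀ a ∈ Ioc t4 (t1 + T), f14 a ≠ f24 a)
    (e12 : f12 (t1 + T) = f13 (t1 + T)) (e14 : f14 (t1 + T) = f13 (t1 + T))
    (e4 : f14 t4 = f24 t4) (e34 : f34 t4 = f24 t4)
    (e2 : f12 t2 = f24 (t2 + T)) (e3 : f13 t3 = f34 (t3 + T))
    (two : ∀ a ∈ Icc t4 (t1 + T), ∀ b ∈ Icc t2 t3, f12 a = f34 a → f12 b ≠ f34 (b + T))
    (m1 : f13 (t1 + T) ≠ f24 (t1 + T)) (hpos : f13 t4 < f24 t4) :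
    ∀ a ∈ Icc t4 (t1 + T), f13 a ≠ f24 a := by
  have L : t4 ∈ Icc t4 (t1 + T) := left_mem_Icc.2 h41.le
  have R : t1 + T ∈ Icc t4 (t1 + T) := right_mem_Icc.2 h41.le
  have s24 : Icc t4 (t1 + T) ⊆ Icc t4 (t2 + T) := Icc_subset_Icc_right (by linarith)
  have s34 : Icc t4 (t1 + T) ⊆ Icc t4 (t3 + T) := Icc_subset_Icc_right (by linarith)
  have s13 : Icc t4 (t1 + T) ⊆ Icc t3 (t1 + T) := Icc_subset_Icc_left h34.le
  have s12 : Icc t4 (t1 + T) ⊆ Icc t2 (t1 + T) := Icc_subset_Icc_left (by linarith)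
  rcases lt_or_gt_of_ne m1 with hend | hend
  · -- the edge `14` separates `13` from `24`
    have below : ∀ a ∈ Ico t4 (t1 + T), f13 a < f14 a := fun a ha =>
      lt_of_ne_on ordConnected_Ico ((c13.mono s13).mono Ico_subset_Icc_self)
        (c14.mono Ico_subset_Icc_self) (fun b hb => (n5 b hb).symm)
        (left_mem_Ico.2 h41) ha (by rw [e4]; exact hpos)
    have above : ∀ a ∈ Ioc t4 (t1 + T), f14 a < f24 a := fun a ha =>
      lt_of_ne_on ordConnected_Ioc (c14.mono Ioc_subset_Icc_self)
        ((c24.mono s24).mono Ioc_subset_Icc_self) n6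
        (right_mem_Ioc.2 h41) ha (by rw [e14]; exact hend)
    intro a ha
    rcases eq_or_lt_of_le ha.1 with rfl | h1
    · exact hpos.ne
    rcases eq_or_lt_of_le ha.2 with rfl | h2
    · exact hend.ne
    exact ((below a ⟨h1.le, h2⟩).trans (above a ⟨h1, h2.le⟩)).ne
  · -- the edges `12` and `34` meet twice
    exfalso
    have a1 : f24 t4 < f12 t4 :=
      lt_of_ne_on ordConnected_Icc (c24.mono s24) (c12.mono s12) (fun b hb => (n1 b hb).symm)
        R L (by rw [e12]; exact hend)
    have a2 : f13 t3 < f12 t3 :=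
      lt_of_ne_on ordConnected_Ico (c13.mono Ico_subset_Icc_self)
        (c12.mono (Ico_subset_Icc_self.trans (Icc_subset_Icc_left h23.le)))
        (fun b hb => (n2 b hb).symm) (x := t4) ⟨h34.le, h41⟩ (left_mem_Ico.2 (by linarith))
        (hpos.trans a1)
    have a3 : f13 (t1 + T) < f34 (t1 + T) :=
      lt_of_ne_on ordConnected_Icc (c13.mono s13) (c34.mono s34) (fun b hb => (n3 b hb).symm)
        L R (by rw [e34]; exact hpos)
    have a4 : f24 (t2 + T) < f34 (t2 + T) :=
      lt_of_ne_on ordConnected_Ioc (c24.mono Ioc_subset_Icc_self)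
        (c34.mono (Ioc_subset_Icc_self.trans (Icc_subset_Icc_right (by linarith))))
        (fun b hb => (n4 b hb).symm) (x := t1 + T) ⟨h41, by linarith⟩
        (right_mem_Ioc.2 (by linarith)) (hend.trans a3)
    obtain ⟨a, ha, hae⟩ := exists_eq_of_lt_of_lt h41.le (c34.mono s34) (c12.mono s12)
      (by rw [e34]; exact a1) (by rw [e12]; exact a3)
    have cs : ContinuousOn (fun b => f34 (b + T)) (Icc t2 t3) :=
      c34.comp (by fun_prop) fun b hb => ⟨by linarith [hb.1], by linarith [hb.2]⟩
    obtain ⟨b, hb, hbe⟩ := exists_eq_of_lt_of_lt (f := f12) (g := fun b => f34 (b + T)) h23.le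
      (c12.mono (Icc_subset_Icc_right (by linarith))) cs
      (by simpa only [e2] using a4) (by simpa only [← e3] using a2)
    exact two a ha b hb hae.symm hbe

/-- The order-theoretic core. The functions are the radii of the edges `12`, `13`, `14`,
`24`, `34` of a `K₄`, in terms of the angle; `T` is a full turn, and an edge `ij` with `i < j`
starts at the angle `tj` and ends at `ti + T`. Then `13` and `24` never meet. -/
theorem k4_core {t1 t2 t3 t4 T : ℝ} {f12 f13 f14 f24 f34 : ℝ → ℝ}
    (h12 : t1 < t2) (h23 : t2 < t3) (h34 : t3 < t4) (h41 : t4 < t1 + T)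
    (c12 : ContinuousOn f12 (Icc t2 (t1 + T))) (c13 : ContinuousOn f13 (Icc t3 (t1 + T)))
    (c14 : ContinuousOn f14 (Icc t4 (t1 + T))) (c24 : ContinuousOn f24 (Icc t4 (t2 + T)))
    (c34 : ContinuousOn f34 (Icc t4 (t3 + T)))
    (n1 : ∀ a ∈ Icc t4 (t1 + T), f12 a ≠ f24 a)
    (n2 : ∀ a ∈ Ico t3 (t1 + T), f12 a ≠ f13 a)
    (n3 : ∀ a ∈ Icc t4 (t1 + T), f34 a ≠ f13 a)
    (n4 : ∀ a ∈ Ioc t4 (t2 + T), f34 a ≠ f24 a)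
    (n5 : ∀ a ∈ Ico t4 (t1 + T), f14 a ≠ f13 a)
    (n6 : ∀ a ∈ Ioc t4 (t1 + T), f14 a ≠ f24 a)
    (e12 : f12 (t1 + T) = f13 (t1 + T)) (e14 : f14 (t1 + T) = f13 (t1 + T))
    (e4 : f14 t4 = f24 t4) (e34 : f34 t4 = f24 t4)
    (e2 : f12 t2 = f24 (t2 + T)) (e3 : f13 t3 = f34 (t3 + T))
    (two : ∀ a ∈ Icc t4 (t1 + T), ∀ b ∈ Icc t2 t3, f12 a = f34 a → f12 b ≠ f34 (b + T))
    (m4 : f13 t4 ≠ f24 t4) (m1 : f13 (t1 + T) ≠ f24 (t1 + T)) :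
    ∀ a ∈ Icc t4 (t1 + T), f13 a ≠ f24 a := by
  rcases lt_or_gt_of_ne m4 with h | h
  · exact k4_core_pos h12 h23 h34 h41 c12 c13 c14 c24 c34 n1 n2 n3 n4 n5 n6 e12 e14 e4 e34 e2 e3
      two m1 h
  · -- negating all radii exchanges the two possible orders at `t4`
    have := k4_core_pos (f12 := fun a => -f12 a) (f13 := fun a => -f13 a)
      (f14 := fun a => -f14 a) (f24 := fun a => -f24 a) (f34 := fun a => -f34 a)
      h12 h23 h34 h41 c12.neg c13.neg c14.neg c24.neg c34.neg
      (by simpa using n1) (by simpa using n2) (by simpa using n3) (by simpa using n4)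
      (by simpa using n5) (by simpa using n6) (by simpa using e12) (by simpa using e14)
      (by simpa using e4) (by simpa using e34) (by simpa using e2) (by simpa using e3)
      (by simpa using two) (by simpa using m1) (by simpa using h)
    simpa using this

/-! ### Polar coordinates -/

/-- The unit vector at angle `a`. -/
noncomputable def unitVec (a : ℝ) : Pt := (Real.cos a, Real.sin a)

theorem unitVec_ne_zero (a : ℝ) : unitVec a ≠ 0 := by
  intro h
  have h1 : Real.cos a = 0 := congrArg Prod.fst h
  have h2 : Real.sin a = 0 := congrArg Prod.snd h
  simpa [h1, h2] using Real.sin_sq_add_cos_sq a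

theorem unitVec_add_int (a : ℝ) (k : ℤ) : unitVec (a + k * (2 * Real.pi)) = unitVec a := by
  simp only [unitVec, Real.cos_add_int_mul_two_pi, Real.sin_add_int_mul_two_pi]

theorem unitVec_add_turn (a : ℝ) : unitVec (a + 2 * Real.pi) = unitVec a := by
  simpa using unitVec_add_int a 1

/-- Uniqueness of polar coordinates around `O`. -/
theorem polar_unique {O : Pt} {r s a b : ℝ} (hr : 0 < r) (hs : 0 < s)
    (h : O + r • unitVec a = O + s • unitVec b) :
    r = s ∧ ∃ k : ℤ, a = b + k * (2 * Real.pi) := by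
  have h := add_left_cancel h
  have h1 : r * Real.cos a = s * Real.cos b := congrArg Prod.fst h
  have h2 : r * Real.sin a = s * Real.sin b := congrArg Prod.snd h
  have hrs : r = s := by
    have : r ^ 2 = s ^ 2 := by
      have ha := Real.sin_sq_add_cos_sq a
      have hb := Real.sin_sq_add_cos_sq b
      calc r ^ 2 = (r * Real.sin a) ^ 2 + (r * Real.cos a) ^ 2 := by linear_combination -r^2 * ha
        _ = s ^ 2 := by rw [h1, h2]; linear_combination s^2 * hb
    exact (pow_left_inj₀ hr.le hs.le two_ne_zero).1 this
  subst hrs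
  refine ⟨rfl, ?_⟩
  have := Real.Angle.cos_sin_inj (mul_left_cancel₀ hr.ne' h1) (mul_left_cancel₀ hr.ne' h2)
  obtain ⟨k, hk⟩ := Real.Angle.angle_eq_iff_two_pi_dvd_sub.1 this
  exact ⟨k, by linarith⟩

/-- Two angles less than a full turn apart that agree modulo full turns are equal. -/
theorem eq_of_eq_add_int {a b : ℝ} {k : ℤ} (h : a = b + k * (2 * Real.pi))
    (h1 : a < b + 2 * Real.pi) (h2 : b < a + 2 * Real.pi) : a = b := by
  have hp := Real.pi_pos
  have k1 : (k : ℝ) < 1 := by by_contra hc; nlinarith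
  have k2 : (-1 : ℝ) < k := by by_contra hc; nlinarith
  have : k = 0 := by
    have : k < 1 := by exact_mod_cast k1
    have : -1 < k := by exact_mod_cast k2
    omega
  subst this; simpa using h

/-- A path in the plane that avoids `O` has continuous polar coordinates around `O`, with any
prescribed angle at its start. -/
theorem exists_polar_lift {O : Pt} {f : ℝ → Pt} (hf : ContinuousOn f (Icc 0 1))
    (hO : ∀ t ∈ Icc (0 : ℝ) 1, f t ≠ O) {s θ₀ : ℝ} (hs : 0 < s)
    (h0 : f 0 = O + s • unitVec θ₀) :
    ∃ ρ α : unitInterval → ℝ, Continuous ρ ∧ Continuous α ∧ (∀ t, 0 < ρ t) ∧ α 0 = θ₀ ∧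
      ∀ t : unitInterval, f t = O + ρ t • unitVec (α t) := by
  have hz : ∀ t : unitInterval,
      (⟨(f t).1 - O.1, (f t).2 - O.2⟩ : ℂ) ≠ 0 := by
    intro t h
    have h1 := congrArg Complex.re h
    have h2 := congrArg Complex.im h
    exact hO t t.2 (Prod.ext (sub_eq_zero.1 h1) (sub_eq_zero.1 h2))
  have hc : Continuous fun t : unitInterval => f t := hf.domRestrict
  have hc1 : Continuous fun t : unitInterval => (⟨(f t).1 - O.1, (f t).2 - O.2⟩ : ℂ) := by
    have : (fun t : unitInterval => (⟨(f t).1 - O.1, (f t).2 - O.2⟩ : ℂ)) =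
        fun t : unitInterval => (((f t).1 - O.1 : ℝ) : ℂ) + (((f t).2 - O.2 : ℝ) : ℂ) * Complex.I := by
      funext t; apply Complex.ext <;> simp
    rw [this]
    have h1 := hc.fst
    have h2 := hc.snd
    fun_prop
  let γ : C(unitInterval, {z : ℂ // z ≠ 0}) :=
    ⟨fun t => ⟨⟨(f t).1 - O.1, (f t).2 - O.2⟩, hz t⟩, hc1.subtype_mk _⟩
  have hexp : ∀ w : ℂ, (Complex.exp w).re = Real.exp w.re * Real.cos w.im ∧
      (Complex.exp w).im = Real.exp w.re * Real.sin w.im := fun w =>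
    ⟨Complex.exp_re w, Complex.exp_im w⟩
  obtain ⟨Γ, hΓ, hΓ0⟩ := Complex.isCoveringMap_exp.exists_path_lifts γ ⟨Real.log s, θ₀⟩ (by
    apply Subtype.ext
    apply Complex.ext
    · rw [(hexp _).1]
      simp [γ, h0, unitVec, Real.exp_log hs]
    · rw [(hexp _).2]
      simp [γ, h0, unitVec, Real.exp_log hs])
  refine ⟨fun t => Real.exp (Γ t).re, fun t => (Γ t).im, by fun_prop, by fun_prop,
    fun t => Real.exp_pos _, by simp [hΓ0], fun t => ?_⟩
  have ht : Complex.exp (Γ t) = ⟨(f t).1 - O.1, (f t).2 - O.2⟩ :=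
    congrArg Subtype.val (congrFun hΓ t)
  have h1 := congrArg Complex.re ht
  have h2 := congrArg Complex.im ht
  rw [(hexp _).1] at h1
  rw [(hexp _).2] at h2
  apply Prod.ext
  · simp only [unitVec, Prod.fst_add, Prod.smul_mk, smul_eq_mul, h1]; ring
  · simp only [unitVec, Prod.snd_add, Prod.smul_mk, smul_eq_mul, h2]; ring

/-! ### Edges as graphs of radial functions -/

/-- `A` is the graph, in polar coordinates around `O`, of the continuous positive radius
function `F` over the angular interval `[a, b]`. -/
structure IsPolarGraph (O : Pt) (A : Set Pt) (F : ℝ → ℝ) (a b : ℝ) : Prop where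
  cont : ContinuousOn F (Icc a b)
  pos : ∀ x ∈ Icc a b, 0 < F x
  mem : ∀ x ∈ Icc a b, O + F x • unitVec x ∈ A
  surj : ∀ p ∈ A, ∃ x ∈ Icc a b, p = O + F x • unitVec x

/-- A curve with strictly decreasing polar angle is a polar graph. -/
theorem polarGraph_of_strictAnti {O : Pt} {A : Set Pt} {f : ℝ → Pt} {ρ α : unitInterval → ℝ}
    (hA : A = f '' Icc 0 1) (hρ : Continuous ρ) (hα : Continuous α) (hpos : ∀ t, 0 < ρ t)
    (hf : ∀ t : unitInterval, f t = O + ρ t • unitVec (α t)) (hanti : StrictAnti α) :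
    ∃ F, IsPolarGraph O A F (α 1) (α 0) := by
  have hrange : ∀ x, x ∈ Icc (α 1) (α 0) → x ∈ range α := by
    intro x hx
    exact mem_range_of_exists_le_of_exists_ge hα ⟨1, hx.1⟩ ⟨0, hx.2⟩
  have hemb := (hα.isClosedEmbedding hanti.injective).isEmbedding
  let e := hemb.toHomeomorph
  have he : ∀ y, α (e.symm y) = y := fun y => congrArg Subtype.val (e.apply_symm_apply y)
  classical
  let F : ℝ → ℝ := fun x => if h : x ∈ range α then ρ (e.symm ⟨x, h⟩) else 0
  have hF : ∀ t, F (α t) = ρ t := by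
    intro t
    have : (⟨α t, mem_range_self t⟩ : range α) = e t := rfl
    simp only [F, dif_pos (mem_range_self t), this, e.symm_apply_apply]
  refine ⟨F, ?_, ?_, ?_, ?_⟩
  · have : ContinuousOn F (range α) := by
      rw [continuousOn_iff_continuous_domRestrict]
      have : (range α).domRestrict F = fun y => ρ (e.symm y) := by
        funext y; simp only [Set.domRestrict_apply, F, dif_pos y.2]
      rw [this]; exact hρ.comp e.symm.continuous
    exact this.mono hrange
  · intro x hx
    obtain ⟨t, rfl⟩ := hrange x hx
    rw [hF]; exact hpos t
  · intro x hx
    obtain ⟨t, rfl⟩ := hrange x hx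
    rw [hF, ← hf, hA]; exact mem_image_of_mem f t.2
  · intro p hp
    rw [hA] at hp
    obtain ⟨t, ht, rfl⟩ := hp
    refine ⟨α ⟨t, ht⟩, ⟨hanti.antitone unitInterval.le_one', hanti.antitone unitInterval.nonneg'⟩, ?_⟩
    rw [hF]; exact hf ⟨t, ht⟩

namespace SimpleDrawing

variable {n : ℕ}

theorem IsCCWLabeling.vtx_eq {D : SimpleDrawing n} {O d : Pt} {φ : ℝ} {θ : Fin n → ℝ}
    (hLab : D.IsCCWLabeling O d φ θ) (i : Fin n) :
    ∃ s : ℝ, 0 < s ∧ D.vtx i = O + s • unitVec (θ i) := hLab.2.2.2 i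

/-- In a generalized twisted drawing the edge `ij` with `i < j` passes through the ray `r`, so it
runs counterclockwise from `j` to `i`, over the angular interval `[θ j, θ i + 2π]`. -/
theorem edge_polarGraph {D : SimpleDrawing n} {O d : Pt} {φ : ℝ} {θ : Fin n → ℝ}
    (hGT : D.GenTwistedAt O d) (hLab : D.IsCCWLabeling O d φ θ) {i j : Fin n} (hij : i < j) :
    ∃ F, IsPolarGraph O (D.arc i j) F (θ j) (θ i + 2 * Real.pi) := by
  obtain ⟨f, hf, hinj, hf0, hf1, hA⟩ := D.arc_simple i j hij.ne
  obtain ⟨⟨hOD, hmono⟩, -, hray⟩ := hGT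
  have hp := Real.pi_pos
  have hθij : θ i < θ j := hLab.2.1 hij
  have hθi := hLab.2.2.1 i
  have hθj := hLab.2.2.1 j
  have hO : ∀ t ∈ Icc (0 : ℝ) 1, f t ≠ O := by
    intro t ht h
    apply hOD
    simp only [drawingSet, mem_iUnion]
    exact ⟨i, j, hij.ne, by rw [hA, ← h]; exact mem_image_of_mem f ht⟩
  obtain ⟨si, hsi, hvi⟩ := hLab.vtx_eq i
  obtain ⟨sj, hsj, hvj⟩ := hLab.vtx_eq j
  obtain ⟨ρ, α, hρ, hα, hpos, hα0, hfα⟩ := exists_polar_lift hf hO (θ₀ := θ i + 2 * Real.pi) hsi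
    (by rw [hf0, hvi, unitVec_add_turn])
  -- c-monotonicity: the angle is injective even modulo full turns
  have hmod : ∀ (s t : unitInterval) (k : ℤ), α s = α t + k * (2 * Real.pi) → s = t := by
    intro s t k h
    have hu : unitVec (α s) = unitVec (α t) := by rw [h, unitVec_add_int]
    have hs : f s ∈ rayFrom O (unitVec (α t)) ∩ D.arc i j :=
      ⟨⟨ρ s, (hpos s).le, by rw [← hu]; exact hfα s⟩, by rw [hA]; exact mem_image_of_mem f s.2⟩
    have ht : f t ∈ rayFrom O (unitVec (α t)) ∩ D.arc i j :=
      ⟨⟨ρ t, (hpos t).le, hfα t⟩, by rw [hA]; exact mem_image_of_mem f t.2⟩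
    exact Subtype.ext (hinj s.2 t.2 (hmono _ (unitVec_ne_zero _) i j hij.ne hs ht))
  have hαinj : Function.Injective α := fun s t h => hmod s t 0 (by simpa using h)
  have hend : ∃ k : ℤ, α 1 = θ j + k * (2 * Real.pi) := by
    have h1 : f ((1 : unitInterval) : ℝ) = D.vtx j := hf1
    rw [hfα, hvj] at h1
    exact (polar_unique (hpos _) hsj h1).2
  obtain ⟨k, hk⟩ := hend
  have lt1 : α 1 < α 0 + 2 * Real.pi := by
    by_contra hc
    obtain ⟨t, ht⟩ := mem_range_of_exists_le_of_exists_ge hα (c := α 0 + 2 * Real.pi)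
      ⟨0, by linarith⟩ ⟨1, by linarith⟩
    have := hmod t 0 1 (by simpa using ht)
    rw [this] at ht; linarith
  have lt2 : α 0 < α 1 + 2 * Real.pi := by
    by_contra hc
    obtain ⟨t, ht⟩ := mem_range_of_exists_le_of_exists_ge hα (c := α 0 - 2 * Real.pi)
      ⟨1, by linarith⟩ ⟨0, by linarith⟩
    have := hmod t 0 (-1) (by rw [ht]; push_cast; ring)
    rw [this] at ht; linarith
  rcases hα.strictMono_of_inj_boundedOrder' hαinj with hm | hm
  · -- an increasing angle would sweep from `i` directly to `j` and miss the ray `r`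
    exfalso
    have h01 : α 0 < α 1 := hm zero_lt_one
    have h1 : α 1 = θ j + 2 * Real.pi := by
      refine eq_of_eq_add_int (k := k - 1) (by rw [hk]; push_cast; ring) ?_ ?_
      · linarith [hθi.2, hθj.1]
      · linarith [hθi.1, hθj.2]
    obtain ⟨x, ⟨r, hr, hxr⟩, hxA⟩ := hray i j hij.ne
    obtain ⟨σ, hσ, hd⟩ := hLab.1
    have hxA' := hxA
    rw [hA] at hxA'
    obtain ⟨t, ht, hft⟩ := hxA'
    have hr0 : r ≠ 0 := by
      rintro rfl
      exact hO t ht (by rw [hft, hxr]; simp)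
    have hx : O + ρ ⟨t, ht⟩ • unitVec (α ⟨t, ht⟩) = O + (r * σ) • unitVec φ := by
      rw [← hfα ⟨t, ht⟩, hft, hxr, hd, smul_smul]; rfl
    obtain ⟨-, l, hl⟩ := polar_unique (hpos _) (mul_pos (lt_of_le_of_ne hr hr0.symm) hσ) hx
    have b1 : α 0 ≤ α ⟨t, ht⟩ := hm.monotone unitInterval.nonneg'
    have b2 : α ⟨t, ht⟩ ≤ α 1 := hm.monotone unitInterval.le_one'
    have : α ⟨t, ht⟩ = φ + 2 * (2 * Real.pi) := by
      refine eq_of_eq_add_int (k := l - 2) (by rw [hl]; push_cast; ring) ?_ ?_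
      · linarith [hθj.2]
      · linarith [hθi.1]
    linarith [hθj.2]
  · have h01 : α 1 < α 0 := hm zero_lt_one
    have h1 : α 1 = θ j := by
      refine eq_of_eq_add_int hk ?_ ?_
      · linarith [hθi.2, hθj.1]
      · linarith [hθi.1, hθj.2]
    obtain ⟨F, hF⟩ := polarGraph_of_strictAnti hA hρ hα hpos hfα hm
    rw [h1, hα0] at hF
    exact ⟨F, hF⟩

/-- In a generalized twisted drawing, if `p < q < s < t` then the edges `ps` and `qt` are
disjoint. -/
theorem interleaved_disjoint {D : SimpleDrawing n} {O d : Pt} {φ : ℝ} {θ : Fin n → ℝ}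
    (hGT : D.GenTwistedAt O d) (hLab : D.IsCCWLabeling O d φ θ) {p q s t : Fin n}
    (hpq : p < q) (hqs : q < s) (hst : s < t) : Disjoint (D.arc p s) (D.arc q t) := by
  obtain ⟨f12, g12⟩ := edge_polarGraph hGT hLab hpq
  obtain ⟨f13, g13⟩ := edge_polarGraph hGT hLab (hpq.trans hqs)
  obtain ⟨f14, g14⟩ := edge_polarGraph hGT hLab (hpq.trans (hqs.trans hst))
  obtain ⟨f24, g24⟩ := edge_polarGraph hGT hLab (hqs.trans hst)
  obtain ⟨f34, g34⟩ := edge_polarGraph hGT hLab hst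
  have h12 : θ p < θ q := hLab.2.1 hpq
  have h23 : θ q < θ s := hLab.2.1 hqs
  have h34 : θ s < θ t := hLab.2.1 hst
  have h41 : θ t < θ p + 2 * Real.pi := by
    linarith [(hLab.2.2.1 t).2, (hLab.2.2.1 p).1]
  set T := 2 * Real.pi with hT
  -- two edges with a common vertex `v` have different radii at all other angles
  have adj : ∀ {A B : Set Pt} {F G : ℝ → ℝ} {a b a' b' : ℝ} (v : Fin n), A ∩ B = {D.vtx v} →
      IsPolarGraph O A F a b → IsPolarGraph O B G a' b' → ∀ x, x ∈ Icc a b → x ∈ Icc a' b' →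
      θ v < x → x < θ v + T → F x ≠ G x := by
    intro A B F G a b a' b' v hAB hA hB x hxa hxb h1 h2 he
    have hm : O + F x • unitVec x ∈ A ∩ B := ⟨hA.mem x hxa, by rw [he]; exact hB.mem x hxb⟩
    rw [hAB, mem_singleton_iff] at hm
    obtain ⟨r, hr, hv⟩ := hLab.vtx_eq v
    rw [hv] at hm
    obtain ⟨-, k, hk⟩ := polar_unique (hA.pos x hxa) hr hm
    have := eq_of_eq_add_int hk h2 (by linarith)
    linarith
  -- the radius of an edge at a vertex angle, when that vertex is on the edge
  have val : ∀ {A : Set Pt} {F : ℝ → ℝ} {a b : ℝ} (v : Fin n) {r x : ℝ}, 0 < r →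
      D.vtx v = O + r • unitVec (θ v) → IsPolarGraph O A F a b → D.vtx v ∈ A →
      (x = θ v ∨ x = θ v + T) → x ∈ Icc a b → b < a + T → F x = r := by
    intro A F a b v r x hr hv hA hvA hx hxab hab
    obtain ⟨y, hy, hvy⟩ := hA.surj _ hvA
    rw [hv] at hvy
    have hux : unitVec x = unitVec (θ v) := by
      rcases hx with rfl | rfl
      · rfl
      · exact unitVec_add_turn _
    rw [← hux] at hvy
    obtain ⟨h, k, hk⟩ := polar_unique hr (hA.pos y hy) hvy
    have := eq_of_eq_add_int hk (by linarith [hxab.2, hy.1]) (by linarith [hxab.1, hy.2])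
    rw [this, h]
  have vl : ∀ {i j : Fin n}, i ≠ j → D.vtx i ∈ D.arc i j := by
    intro i j h
    obtain ⟨f, -, -, h0, -, hA⟩ := D.arc_simple i j h
    rw [hA, ← h0]; exact mem_image_of_mem f (by simp)
  have vr : ∀ {i j : Fin n}, i ≠ j → D.vtx j ∈ D.arc i j := by
    intro i j h
    rw [D.arc_symm]; exact vl h.symm
  have n12 : p ≠ q := hpq.ne
  have n23 : q ≠ s := hqs.ne
  have n34 : s ≠ t := hst.ne
  have n13 : p ≠ s := (hpq.trans hqs).ne
  have n24 : q ≠ t := (hqs.trans hst).ne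
  have n14 : p ≠ t := (hpq.trans (hqs.trans hst)).ne
  obtain ⟨r1, hr1, hv1⟩ := hLab.vtx_eq p
  obtain ⟨r2, hr2, hv2⟩ := hLab.vtx_eq q
  obtain ⟨r3, hr3, hv3⟩ := hLab.vtx_eq s
  obtain ⟨r4, hr4, hv4⟩ := hLab.vtx_eq t
  have i2 : D.arc p q ∩ D.arc q t = {D.vtx q} := by
    rw [D.arc_symm p q]; exact D.adj_inter q p t n12.symm n24 n14
  have i3 : D.arc s t ∩ D.arc p s = {D.vtx s} := by
    rw [D.arc_symm p s]; exact D.adj_inter s t p n34 n13.symm n14.symm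
  have i4 : D.arc s t ∩ D.arc q t = {D.vtx t} := by
    rw [D.arc_symm s t, D.arc_symm q t]; exact D.adj_inter t s q n34.symm n24.symm n23.symm
  have i4' : D.arc p t ∩ D.arc q t = {D.vtx t} := by
    rw [D.arc_symm p t, D.arc_symm q t]; exact D.adj_inter t p q n14.symm n24.symm n12
  have v12 := val p hr1 hv1 g12 (vl n12) (Or.inr rfl) ⟨by linarith, le_rfl⟩ (by linarith)
  have v13 := val p hr1 hv1 g13 (vl n13) (Or.inr rfl) ⟨by linarith, le_rfl⟩ (by linarith)
  have v14 := val p hr1 hv1 g14 (vl n14) (Or.inr rfl) ⟨by linarith, le_rfl⟩ (by linarith)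
  have w12 := val q hr2 hv2 g12 (vr n12) (Or.inl rfl) ⟨le_rfl, by linarith⟩ (by linarith)
  have w24 := val q hr2 hv2 g24 (vl n24) (Or.inr rfl) ⟨by linarith, le_rfl⟩ (by linarith)
  have x13 := val s hr3 hv3 g13 (vr n13) (Or.inl rfl) ⟨le_rfl, by linarith⟩ (by linarith)
  have x34 := val s hr3 hv3 g34 (vl n34) (Or.inr rfl) ⟨by linarith, le_rfl⟩ (by linarith)
  have y14 := val t hr4 hv4 g14 (vr n14) (Or.inl rfl) ⟨le_rfl, by linarith⟩ (by linarith)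
  have y24 := val t hr4 hv4 g24 (vr n24) (Or.inl rfl) ⟨le_rfl, by linarith⟩ (by linarith)
  have y34 := val t hr4 hv4 g34 (vr n34) (Or.inl rfl) ⟨le_rfl, by linarith⟩ (by linarith)
  have key := k4_core h12 h23 h34 h41 g12.cont g13.cont g14.cont g24.cont g34.cont
    (fun a ha => adj q i2 g12 g24 a ⟨by linarith [ha.1], ha.2⟩ ⟨ha.1, by linarith [ha.2]⟩
      (by linarith [ha.1]) (by linarith [ha.2]))
    (fun a ha => adj p (D.adj_inter p q s n12 n13 n23) g12 g13 a
      ⟨by linarith [ha.1], ha.2.le⟩ ⟨ha.1, ha.2.le⟩ (by linarith [ha.1]) (by linarith [ha.2]))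
    (fun a ha => adj s i3 g34 g13 a ⟨ha.1, by linarith [ha.2]⟩ ⟨by linarith [ha.1], ha.2⟩
      (by linarith [ha.1]) (by linarith [ha.2]))
    (fun a ha => adj t i4 g34 g24 a ⟨ha.1.le, by linarith [ha.2]⟩ ⟨ha.1.le, ha.2⟩
      ha.1 (by linarith [ha.2]))
    (fun a ha => adj p (D.adj_inter p t s n14 n13 n34.symm) g14 g13 a
      ⟨ha.1, ha.2.le⟩ ⟨by linarith [ha.1], ha.2.le⟩ (by linarith [ha.1]) (by linarith [ha.2]))
    (fun a ha => adj t i4' g14 g24 a ⟨ha.1.le, ha.2⟩ ⟨ha.1.le, by linarith [ha.2]⟩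
      ha.1 (by linarith [ha.2]))
    (v12.trans v13.symm) (v14.trans v13.symm) (y14.trans y24.symm) (y34.trans y24.symm)
    (w12.trans w24.symm) (x13.trans x34.symm)
    (by
      -- `12` and `34` share at most one point, which has only one angle modulo `2π`
      intro a ha b hb ea eb
      have ma : a ∈ Icc (θ q) (θ p + T) := ⟨by linarith [ha.1], ha.2⟩
      have mb : b ∈ Icc (θ q) (θ p + T) := ⟨hb.1, by linarith [hb.2]⟩
      have pa : O + f12 a • unitVec a ∈ D.arc p q ∩ D.arc s t :=
        ⟨g12.mem a ma, by rw [ea]; exact g34.mem a ⟨ha.1, by linarith [ha.2]⟩⟩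
      have pb : O + f12 b • unitVec b ∈ D.arc p q ∩ D.arc s t := by
        refine ⟨g12.mem b mb, ?_⟩
        rw [eb, ← unitVec_add_turn b]
        exact g34.mem (b + T) ⟨by linarith [hb.1], by linarith [hb.2]⟩
      have := D.indep_inter p q s t n12 n34 n13 n14 n23 n24 pa pb
      obtain ⟨-, k, hk⟩ := polar_unique (g12.pos a ma) (g12.pos b mb) this
      have := eq_of_eq_add_int hk (by linarith [ha.2, hb.1]) (by linarith [ha.1, hb.2])
      linarith [ha.1, hb.2])
    (by
      intro h
      refine D.vtx_not_mem p s t n13 n14.symm n34.symm ?_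
      rw [hv4, ← y24, ← h]
      exact g13.mem _ ⟨h34.le, h41.le⟩)
    (by
      intro h
      refine D.vtx_not_mem q t p n24 n12 n14 ?_
      rw [hv1, ← v13, h, ← unitVec_add_turn]
      exact g24.mem _ ⟨h41.le, by linarith⟩)
  rw [Set.disjoint_left]
  intro x hx hx'
  obtain ⟨a, ha, rfl⟩ := g13.surj x hx
  obtain ⟨b, hb, hab⟩ := g24.surj _ hx'
  obtain ⟨h, k, hk⟩ := polar_unique (g13.pos a ha) (g24.pos b hb) hab
  obtain rfl := eq_of_eq_add_int hk (by linarith [ha.2, hb.1]) (by linarith [ha.1, hb.2])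
  exact key a ⟨hb.1, ha.2⟩ h

/-! ### The Hamiltonian cycle -/

theorem Crosses.symm {D : SimpleDrawing n} {i j k l : Fin n} (h : D.Crosses i j k l) :
    D.Crosses k l i j := by
  obtain ⟨x, h1, h2, h3⟩ := h
  exact ⟨x, h2, h1, fun h => h3 h.symm⟩

theorem Crosses.swap {D : SimpleDrawing n} {i j k l : Fin n} (h : D.Crosses i j k l) :
    D.Crosses j i k l := by
  obtain ⟨x, h1, h2, h3⟩ := h
  exact ⟨x, by rwa [D.arc_symm], h2, fun h => h3 ⟨h.1.symm, h.2⟩⟩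

theorem not_crosses_adj (D : SimpleDrawing n) {i j k : Fin n} (hij : i ≠ j) (hik : i ≠ k)
    (hjk : j ≠ k) : ¬ D.Crosses i j i k := by
  rintro ⟨x, h1, h2, h3⟩
  have : x ∈ D.arc i j ∩ D.arc i k := ⟨h1, h2⟩
  rw [D.adj_inter i j k hij hik hjk, mem_singleton_iff] at this
  exact h3 ⟨Or.inl this, Or.inl this⟩

/-- Two distinct edges both joining the first half `{0, …, m - 1}` to the second half
`{m - 1, …, 2m - 2}` at label distance `m - 1` or `m` do not cross: they share a vertex or
their endpoints interleave. -/
theorem not_crosses_of_halves {D : SimpleDrawing n} {O d : Pt} {φ : ℝ} {θ : Fin n → ℝ}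
    (hGT : D.GenTwistedAt O d) (hLab : D.IsCCWLabeling O d φ θ) {m : ℕ} (hm : 2 ≤ m)
    {p q c e : Fin n} (hp : p.1 + 1 ≤ m) (hq : m ≤ q.1 + 1)
    (hpq : q.1 = p.1 + m ∨ q.1 + 1 = p.1 + m)
    (hc : c.1 + 1 ≤ m) (he : m ≤ e.1 + 1) (hce : e.1 = c.1 + m ∨ e.1 + 1 = c.1 + m)
    (hne : p.1 + q.1 ≠ c.1 + e.1) : ¬ D.Crosses p q c e := by
  have npq : p ≠ q := by rw [Ne, Fin.ext_iff]; omega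
  have nce : c ≠ e := by rw [Ne, Fin.ext_iff]; omega
  intro h
  by_cases h1 : p = c
  · subst h1
    exact D.not_crosses_adj npq nce (by rw [Ne, Fin.ext_iff]; omega) h
  by_cases h2 : q = e
  · subst h2
    exact D.not_crosses_adj npq.symm nce.symm h1 h.swap.symm.swap.symm
  by_cases h3 : p = e
  · subst h3
    exact D.not_crosses_adj npq nce.symm (by rw [Ne, Fin.ext_iff]; omega) h.symm.swap.symm
  by_cases h4 : q = c
  · subst h4
    exact D.not_crosses_adj npq.symm nce (by rw [Ne, Fin.ext_iff]; omega) h.swap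
  rw [Fin.ext_iff] at h1 h2 h3 h4
  rcases lt_or_gt_of_ne h1 with h5 | h5
  · obtain ⟨x, hx, hx', -⟩ := h
    exact Set.disjoint_left.1 (interleaved_disjoint hGT hLab (p := p) (q := c) (s := q) (t := e)
      (by rw [Fin.lt_def]; omega) (by rw [Fin.lt_def]; omega) (by rw [Fin.lt_def]; omega)) hx hx'
  · obtain ⟨x, hx, hx', -⟩ := h
    exact Set.disjoint_left.1 (interleaved_disjoint hGT hLab (p := c) (q := p) (s := e) (t := q)
      (by rw [Fin.lt_def]; omega) (by rw [Fin.lt_def]; omega) (by rw [Fin.lt_def]; omega)) hx' hx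

end SimpleDrawing

theorem cycPos_val {m t : ℕ} (hn : 0 < 2 * m - 1) (ht : t < 2 * m - 1) :
    (cycPos (2 * m - 1) hn t).1 = if t % 2 = 0 then t / 2 else m + t / 2 := by
  simp only [cycPos, hamCycIdx, Nat.mod_eq_of_lt ht]
  split_ifs with h
  · exact Nat.mod_eq_of_lt (by omega)
  · rw [Nat.mod_eq_of_lt (by omega)]; omega

/-- The edge at position `a` of the cycle joins the two halves, and the sum of its labels
determines `a`. -/
theorem cycPos_edge {m a : ℕ} (hm : 2 ≤ m) (hn : 0 < 2 * m - 1) (ha : a < 2 * m - 1) :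
    ∃ p q : Fin (2 * m - 1), p.1 + 1 ≤ m ∧ m ≤ q.1 + 1 ∧ (q.1 = p.1 + m ∨ q.1 + 1 = p.1 + m) ∧
      p.1 + q.1 = (if a + 1 = 2 * m - 1 then m - 1 else m + a) ∧
      ((cycPos (2 * m - 1) hn a = p ∧ cycPos (2 * m - 1) hn (a + 1) = q) ∨
        (cycPos (2 * m - 1) hn a = q ∧ cycPos (2 * m - 1) hn (a + 1) = p)) := by
  have h1 := cycPos_val hn ha
  by_cases hl : a + 1 = 2 * m - 1
  · have h2 : (cycPos (2 * m - 1) hn (a + 1)).1 = 0 := by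
      simp [cycPos, hamCycIdx, hl]
    rw [if_pos (by omega)] at h1
    refine ⟨cycPos _ hn (a + 1), cycPos _ hn a, ?_, ?_, ?_, ?_, Or.inr ⟨rfl, rfl⟩⟩ <;>
      simp only [h1, h2, if_pos hl] <;> omega
  · have h2 := cycPos_val hn (t := a + 1) (by omega)
    rcases Nat.mod_two_eq_zero_or_one a with h | h
    · rw [if_pos h] at h1
      rw [if_neg (by omega)] at h2
      refine ⟨cycPos _ hn a, cycPos _ hn (a + 1), ?_, ?_, ?_, ?_, Or.inl ⟨rfl, rfl⟩⟩ <;>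
        simp only [h1, h2, if_neg hl] <;> omega
    · rw [if_neg (by omega)] at h1
      rw [if_pos (by omega)] at h2
      refine ⟨cycPos _ hn (a + 1), cycPos _ hn a, ?_, ?_, ?_, ?_, Or.inr ⟨rfl, rfl⟩⟩ <;>
        simp only [h1, h2, if_neg hl] <;> omega

/-- For odd `n ≥ 3` and a generalized twisted drawing of `K n` labeled
counterclockwise around `O`, the Hamiltonian cycle
`v_1, v_{⌈n/2⌉+1}, v_2, v_{⌈n/2⌉+2}, …, v_{⌈n/2⌉-1}, v_n, v_{⌈n/2⌉}, v_1` is plane. -/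
theorem stmt_2 (n : ℕ) (hn : 3 ≤ n) (hodd : Odd n) (D : SimpleDrawing n)
    (O d : Pt) (φ : ℝ) (θ : Fin n → ℝ)
    (hGT : D.GenTwistedAt O d) (hLab : D.IsCCWLabeling O d φ θ) :
    Function.Bijective (fun t : Fin n => cycPos n (by omega) t.1) ∧
    ∀ a b : ℕ, a < n → b < n → a ≠ b →
      ¬ D.Crosses (cycPos n (by omega) a) (cycPos n (by omega) (a + 1))
          (cycPos n (by omega) b) (cycPos n (by omega) (b + 1)) := by
  obtain ⟨m, rfl⟩ : ∃ m, n = 2 * m - 1 := by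
    obtain ⟨k, hk⟩ := hodd
    exact ⟨k + 1, by omega⟩
  have hm : 2 ≤ m := by omega
  refine ⟨Finite.injective_iff_bijective.1 ?_, ?_⟩
  · intro s t h
    have h := congrArg Fin.val h
    simp only [cycPos_val _ s.2, cycPos_val _ t.2] at h
    apply Fin.ext
    have := s.2
    have := t.2
    split_ifs at h <;> omega
  · intro a b ha hb hab
    obtain ⟨p, q, hp, hq, hpq, hs, h⟩ := cycPos_edge hm (by omega) ha
    obtain ⟨c, e, hc, he, hce, hs', h'⟩ := cycPos_edge hm (by omega) hb
    have key := SimpleDrawing.not_crosses_of_halves hGT hLab hm hp hq hpq hc he hce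
      (by rw [hs, hs']; split_ifs <;> omega)
    rcases h with ⟨h1, h2⟩ | ⟨h1, h2⟩ <;> rcases h' with ⟨h3, h4⟩ | ⟨h3, h4⟩ <;>
      rw [h1, h2, h3, h4] <;> intro hX
    · exact key hX
    · exact key hX.symm.swap.symm
    · exact key hX.swap
    · exact key hX.swap.symm.swap.symm
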